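/- Every K_{s,t}-saturated n-by-n bipartite graph with 1 ≤ s ≤ t ≤ n contains at least (s+t-2)n - (s+t-2)^2 edges. -/

import Mathlib

open Finset

/-- The bipartite graph (with parts indexed by `Fin n`) whose edge set is `E`
contains a complete bipartite graph with `a` vertices on the left and `b` on the right. -/
def containsK {n : ℕ} (E : Finset (Fin n × Fin n)) (a b : ℕ) : Prop :=
  ∃ S T : Finset (Fin n), S.card = a ∧ T.card = b ∧ ∀ u ∈ S, ∀ v ∈ T, (u, v) ∈ E

/-- `E` is (unordered) `K_{s,t}`-saturated: no copy of `K_{s,t}` in either orientation,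
and adding any missing edge creates one. -/
def Saturated {n : ℕ} (s t : ℕ) (E : Finset (Fin n × Fin n)) : Prop :=
  ¬ (containsK E s t ∨ containsK E t s) ∧
    ∀ u v : Fin n, (u, v) ∉ E →
      (containsK (insert (u, v) E) s t ∨ containsK (insert (u, v) E) t s)

/-- Degree of a left vertex. -/
def degL {n : ℕ} (E : Finset (Fin n × Fin n)) (u : Fin n) : ℕ :=
  (E.filter fun p => p.1 = u).card

/-- Degree of a right vertex. -/
def degR {n : ℕ} (E : Finset (Fin n × Fin n)) (v : Fin n) : ℕ :=
  (E.filter fun p => p.2 = v).card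

/-!
Write `σ = s - 1` and `τ = t - 1`. Call the *excess* of a pair of vertex sets `(A, B)` its number of
edges minus a cost `ρ` for each vertex of `A` and `κ` for each vertex of `B`. In an
inclusion-maximal pair of maximal excess, a vertex outside has fewer neighbours inside than its
cost, which restricts the copies of `K_{s,t}` that a missing edge leaving the pair can create.

If some right degree is below `τ`, a direct count suffices, and if all of them are at least `σ + τ`,
there is nothing to do. Otherwise fix a right vertex `v` of degree less than `σ + τ`, and let
`(U, V)` have maximal excess, for the costs `τ` and `σ`, among the pairs with `N(v) ⊆ U`. Comparing
it with `(N(v), ∅)` bounds `e(U, V)` from below, and this suffices if `|Uᶜ| ≤ |Vᶜ|`, or if all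
vertices outside `U` have degree at least `σ + τ`. If not, take `u ∉ U` of smaller degree, and let
`(A, B)` have maximal excess, for the costs `σ` and `τ`, among the pairs with `N(v) ⊆ A` and
`N(u) ⊆ B`. The created copies force `Aᶜ ⊆ U`, and a greedy matching of `V \ B` into `N(u) \ V`
yields `|V \ B| ≤ τ`; counting the edges around `A`, `B` and `V` then gives the bound.
-/

section Finite

lemma exists_ge_forall_le_forall_lt {P M : Type*} [Finite P] [PartialOrder P] [LinearOrder M]
    (f : P → M) (p : P) :
    ∃ q, p ≤ q ∧ (∀ q', p ≤ q' → f q' ≤ f q) ∧ ∀ q', q < q' → f q' < f q := by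
  obtain ⟨m, hpm, hm⟩ := Set.exists_max_image (Set.Ici p) f (Set.toFinite _) ⟨p, le_rfl⟩
  obtain ⟨q, -, hq⟩ :=
    (Set.toFinite {q | p ≤ q ∧ f m ≤ f q}).exists_le_maximal ⟨hpm, le_rfl⟩
  refine ⟨q, hq.prop.1, fun q' hq' ↦ (hm q' hq').trans hq.prop.2, fun q' hqq' ↦ ?_⟩
  by_contra! h
  exact hq.not_prop_of_gt hqq' ⟨hq.prop.1.trans hqq'.le, hq.prop.2.trans h⟩

-- Greedy matching: the lightest element of `V` is paired with some element of `F` that is no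
-- heavier, and the hypothesis survives the removal of the pair.
lemma card_le_card_of_sum_filter_le {ι κ M : Type*} [AddCommMonoid M] [LinearOrder M]
    [IsOrderedCancelAddMonoid M] {m : ι → M} {g : κ → M} {V : Finset ι} {F : Finset κ}
    (hm : ∀ v ∈ V, 0 < m v) (hg : ∀ w ∈ F, 0 ≤ g w)
    (h : ∀ j, ∑ v ∈ V with m v ≤ j, m v ≤ ∑ w ∈ F with g w ≤ j, g w) : #V ≤ #F := by
  classical
  induction V using induction_on_min_value m generalizing F with
  | empty => simp
  | insert v V hv hmin ih =>
    have hpos : 0 < ∑ x ∈ insert v V with m x ≤ m v, m x :=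
      sum_pos (fun x hx ↦ hm x (mem_filter.mp hx).1) ⟨v, by simp⟩
    obtain ⟨w, hw⟩ : {w ∈ F | g w ≤ m v}.Nonempty :=
      nonempty_of_sum_ne_zero (hpos.trans_le (h (m v))).ne'
    obtain ⟨hwF, hwv⟩ := mem_filter.mp hw
    have hg' : ∀ x ∈ F.erase w, 0 ≤ g x := fun x hx ↦ hg x (mem_of_mem_erase hx)
    have hVF : #V ≤ #(F.erase w) := by
      refine ih (fun x hx ↦ hm x (mem_insert_of_mem hx)) hg' fun j ↦ ?_
      obtain hj | hj := lt_or_ge j (m v)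
      · rw [filter_false_of_mem fun x hx ↦ (hj.trans_le (hmin x hx)).not_ge, sum_empty]
        exact sum_nonneg fun x hx ↦ hg' x (mem_filter.mp hx).1
      · have hj' := h j
        rw [filter_insert, if_pos hj, sum_insert (by simp [hv]),
          ← add_sum_erase _ _ (mem_filter.mpr ⟨hwF, hwv.trans hj⟩), ← filter_erase] at hj'
        exact le_of_add_le_add_left (hj'.trans (add_le_add_left hwv _))
    rw [card_insert_of_notMem hv, ← card_erase_add_one hwF]
    lia

end Finite

section EdgeCount

open Function Rel

variable {α β : Type*} (r : α → β → Prop) [DecidableRel r]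

lemma card_interedges_eq_sum_above (A : Finset α) (B : Finset β) :
    #(interedges r A B) = ∑ a ∈ A, #(B.bipartiteAbove r a) := by
  rw [interedges, card_filter, sum_product]
  simp only [bipartiteAbove, card_filter]

lemma card_interedges_eq_sum_below (A : Finset α) (B : Finset β) :
    #(interedges r A B) = ∑ b ∈ B, #(A.bipartiteBelow r b) := by
  rw [card_interedges_eq_sum_above, sum_card_bipartiteAbove_eq_sum_card_bipartiteBelow]

lemma card_interedges_swap (A : Finset α) (B : Finset β) :
    #(interedges (swap r) B A) = #(interedges r A B) := by
  rw [card_interedges_eq_sum_above, card_interedges_eq_sum_below]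
  rfl

lemma card_interedges_union_left [DecidableEq α] {A A' : Finset α} (h : Disjoint A A')
    (B : Finset β) :
    #(interedges r (A ∪ A') B) = #(interedges r A B) + #(interedges r A' B) := by
  simp only [card_interedges_eq_sum_above, sum_union h]

lemma card_interedges_union_right [DecidableEq β] (A : Finset α) {B B' : Finset β}
    (h : Disjoint B B') :
    #(interedges r A (B ∪ B')) = #(interedges r A B) + #(interedges r A B') := by
  simp only [card_interedges_eq_sum_below, sum_union h]

lemma card_interedges_insert_left [DecidableEq α] {a : α} {A : Finset α} (ha : a ∉ A)
    (B : Finset β) :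
    #(interedges r (insert a A) B) = #(B.bipartiteAbove r a) + #(interedges r A B) := by
  simp only [card_interedges_eq_sum_above, sum_insert ha]

lemma card_interedges_add_card_interedges_compl_left [Fintype α] [DecidableEq α]
    (A : Finset α) (B : Finset β) :
    #(interedges r A B) + #(interedges r Aᶜ B) = #(interedges r univ B) := by
  rw [← card_interedges_union_left r disjoint_compl_right, union_compl]

lemma card_interedges_add_card_interedges_compl_right [Fintype β] [DecidableEq β]
    (A : Finset α) (B : Finset β) :
    #(interedges r A B) + #(interedges r A Bᶜ) = #(interedges r A univ) := by
  rw [← card_interedges_union_right r _ disjoint_compl_right, union_compl]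

variable {r}

lemma mul_card_le_card_interedges_left {A : Finset α} {B : Finset β} {k : ℕ}
    (h : ∀ a ∈ A, k ≤ #(B.bipartiteAbove r a)) : k * #A ≤ #(interedges r A B) := by
  rw [card_interedges_eq_sum_above, mul_comm]
  exact card_nsmul_le_sum A _ k h

lemma mul_card_le_card_interedges_right {A : Finset α} {B : Finset β} {k : ℕ}
    (h : ∀ b ∈ B, k ≤ #(A.bipartiteBelow r b)) : k * #B ≤ #(interedges r A B) := by
  rw [card_interedges_eq_sum_below, mul_comm]
  exact card_nsmul_le_sum B _ k h

lemma card_interedges_add_mul_card_compl_le [Fintype β] [DecidableEq β] (A : Finset α)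
    (B : Finset β) {k : ℕ} (h : ∀ b ∉ B, k ≤ #(A.bipartiteBelow r b)) :
    #(interedges r A B) + k * #Bᶜ ≤ #(interedges r A univ) := by
  rw [← card_interedges_add_card_interedges_compl_right r A B]
  gcongr
  exact mul_card_le_card_interedges_right fun b hb ↦ h b (mem_compl.mp hb)

lemma card_le_card_bipartiteAbove {a : α} {T B : Finset β} (hTB : T ⊆ B)
    (h : ∀ b ∈ T, r a b) : #T ≤ #(B.bipartiteAbove r a) :=
  card_le_card fun b hb ↦ (mem_bipartiteAbove r).mpr ⟨hTB hb, h b hb⟩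

lemma card_le_card_bipartiteBelow {b : β} {S A : Finset α} (hSA : S ⊆ A)
    (h : ∀ a ∈ S, r a b) : #S ≤ #(A.bipartiteBelow r b) :=
  card_le_card_bipartiteAbove (r := swap r) hSA h

end EdgeCount

section Extremal

open Function Rel

variable {α β : Type*} {r : α → β → Prop} [DecidableRel r] {ρ κ : ℕ} {C A : Finset α}
  {D B : Finset β}

/-- The excess of the number of edges between `A` and `B` over the cost of these sets, when a vertex
of `A` costs `ρ` and a vertex of `B` costs `κ`. Maximizing it yields the dense pairs on which the
edge count is based. -/
def excess (r : α → β → Prop) [DecidableRel r] (ρ κ : ℕ) (A : Finset α) (B : Finset β) : ℤ :=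
  #(interedges r A B) - ρ * #A - κ * #B

lemma excess_swap : excess (swap r) κ ρ B A = excess r ρ κ A B := by
  rw [excess, excess, card_interedges_swap]
  ring

/-- `(A, B)` maximizes the excess among the pairs containing `(C, D)`, and is inclusion-maximal
among the maximizers. -/
structure IsExtremal (r : α → β → Prop) [DecidableRel r] (ρ κ : ℕ) (C : Finset α) (D : Finset β)
    (A : Finset α) (B : Finset β) : Prop where
  left_subset : C ⊆ A
  right_subset : D ⊆ B
  excess_le : ∀ ⦃A' B'⦄, C ⊆ A' → D ⊆ B' → excess r ρ κ A' B' ≤ excess r ρ κ A B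
  excess_lt : ∀ ⦃A' B'⦄, (A, B) < (A', B') → excess r ρ κ A' B' < excess r ρ κ A B

variable (r ρ κ C D) in
lemma exists_isExtremal [Finite α] [Finite β] : ∃ A B, IsExtremal r ρ κ C D A B := by
  obtain ⟨⟨A, B⟩, hCD, hle, hlt⟩ :=
    exists_ge_forall_le_forall_lt (fun p : Finset α × Finset β ↦ excess r ρ κ p.1 p.2) (C, D)
  exact ⟨A, B, hCD.1, hCD.2, fun A' B' hA hB ↦ hle (A', B') ⟨hA, hB⟩, fun A' B' ↦ hlt (A', B')⟩

namespace IsExtremal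

lemma swap (h : IsExtremal r ρ κ C D A B) : IsExtremal (swap r) κ ρ D C B A where
  left_subset := h.right_subset
  right_subset := h.left_subset
  excess_le B' A' hB hA := by simpa only [excess_swap] using h.excess_le hA hB
  excess_lt B' A' hlt := by
    simpa only [excess_swap] using h.excess_lt (Prod.swap_lt_swap.mp hlt)

lemma mem_left (h : IsExtremal r ρ κ C D A B) {a : α} {T : Finset β} (hTB : T ⊆ B) (hT : ρ ≤ #T)
    (ha : ∀ b ∈ T, r a b) : a ∈ A := by
  classical
  by_contra haA
  have hlt := h.excess_lt (Prod.mk_lt_mk_of_lt_of_le (ssubset_insert haA) (le_refl B))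
  have hdeg := card_le_card_bipartiteAbove hTB ha
  rw [excess, excess, card_interedges_insert_left r haA, card_insert_of_notMem haA] at hlt
  push_cast at hlt
  linarith

lemma mem_right (h : IsExtremal r ρ κ C D A B) {b : β} {S : Finset α} (hSA : S ⊆ A) (hS : κ ≤ #S)
    (hb : ∀ a ∈ S, r a b) : b ∈ B :=
  h.swap.mem_left hSA hS hb

lemma card_bipartiteBelow_lt (h : IsExtremal r ρ κ C D A B) {b : β} (hb : b ∉ B) :
    #(A.bipartiteBelow r b) < κ := by
  by_contra! hle
  exact hb (h.mem_right (filter_subset _ A) hle fun a ha ↦ ((mem_bipartiteBelow r).mp ha).2)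

lemma le_card_bipartiteAbove (h : IsExtremal r ρ κ C D A B) {a : α} (haA : a ∈ A) (haC : a ∉ C) :
    ρ ≤ #(B.bipartiteAbove r a) := by
  classical
  have hle := h.excess_le (subset_erase.mpr ⟨h.left_subset, haC⟩) h.right_subset
  rw [← insert_erase haA, excess, excess, erase_insert (notMem_erase a A),
    card_interedges_insert_left r (notMem_erase a A), card_insert_of_notMem (notMem_erase a A)]
    at hle
  push_cast at hle
  linarith

end IsExtremal

end Extremal

section StrongSaturation

open Function Rel

variable {α β : Type*} {r : α → β → Prop} {σ τ : ℕ}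

/-- Adding the edge `uv` to `r` makes `S ∪ {u}` and `T ∪ {v}` the sides of a complete bipartite
graph. -/
structure IsCompletion (r : α → β → Prop) (u : α) (v : β) (S : Finset α) (T : Finset β) : Prop where
  adj_right : ∀ x ∈ S, r x v
  adj_left : ∀ y ∈ T, r u y
  adj : ∀ x ∈ S, ∀ y ∈ T, r x y

lemma IsCompletion.swap {u : α} {v : β} {S : Finset α} {T : Finset β}
    (h : IsCompletion r u v S T) : IsCompletion (swap r) v u T S :=
  ⟨h.adj_left, h.adj_right, fun y hy x hx ↦ h.adj x hx y hy⟩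

lemma IsCompletion.card_mul_card_le_card_interedges [DecidableRel r] {u : α} {v : β}
    {A S : Finset α} {B T : Finset β} (h : IsCompletion r u v S T) (hSA : S ⊆ A) (hTB : T ⊆ B) :
    #S * #T ≤ #(interedges r A B) := by
  rw [← card_product]
  refine card_le_card fun ⟨x, y⟩ hxy ↦ ?_
  obtain ⟨hx, hy⟩ := mem_product.mp hxy
  exact mk_mem_interedges_iff.mpr ⟨hSA hx, hTB hy, h.adj x hx y hy⟩

/-- Adding any missing edge to `r` creates a new copy of `K_{σ+1,τ+1}`, in one of the two
orientations. In contrast to saturation, `r` may already contain such copies. -/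
def StronglySaturated (r : α → β → Prop) (σ τ : ℕ) : Prop :=
  ∀ u v, ¬ r u v → ∃ S T, IsCompletion r u v S T ∧ (#S = σ ∧ #T = τ ∨ #S = τ ∧ #T = σ)

namespace StronglySaturated

lemma swap (h : StronglySaturated r σ τ) : StronglySaturated (swap r) σ τ := by
  intro v u huv
  obtain ⟨S, T, hST, hcard⟩ := h u v huv
  exact ⟨T, S, hST.swap, hcard.symm.imp And.symm And.symm⟩

lemma symm (h : StronglySaturated r σ τ) : StronglySaturated r τ σ := by
  intro u v huv
  obtain ⟨S, T, hST, hcard⟩ := h u v huv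
  exact ⟨S, T, hST, hcard.symm⟩

variable [DecidableRel r]

lemma le_card_bipartiteBelow [Fintype α] (h : StronglySaturated r σ τ) (hστ : σ ≤ τ)
    (hσ : σ ≤ Fintype.card α) (v : β) : σ ≤ #(univ.bipartiteBelow r v) := by
  by_cases hv : ∀ u, r u v
  · exact hσ.trans (card_le_card_bipartiteBelow (subset_univ univ) fun u _ ↦ hv u)
  · push Not at hv
    obtain ⟨u, hu⟩ := hv
    obtain ⟨S, T, hST, hcard⟩ := h u v hu
    have hS : σ ≤ #S := by lia
    exact hS.trans (card_le_card_bipartiteBelow (subset_univ S) hST.adj_right)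

lemma exists_isCompletion_of_notMem_left [Fintype α] (h : StronglySaturated r σ τ) (hστ : σ ≤ τ)
    {v : β} {A C : Finset α} {B D : Finset β} (hAB : IsExtremal r τ σ C D A B)
    (hvC : univ.bipartiteBelow r v ⊆ C) {u : α} (hu : u ∉ A) :
    ∃ S T, IsCompletion r u v S T ∧ S ⊆ C ∧ T ⊆ B ∧ #S = τ ∧ #T = σ := by
  have huv : ¬ r u v := fun huv ↦ hu (hAB.left_subset (hvC (by simpa using huv)))
  obtain ⟨S, T, hST, hcard⟩ := h u v huv
  have hSC : S ⊆ C := fun x hx ↦ hvC (by simpa using hST.adj_right x hx)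
  have hTB : T ⊆ B := fun y hy ↦
    hAB.mem_right (hSC.trans hAB.left_subset) (by lia) fun x hx ↦ hST.adj x hx y hy
  obtain hcard | hcard := hcard
  · exact absurd (hAB.mem_left hTB hcard.2.ge hST.adj_left) hu
  · exact ⟨S, T, hST, hSC, hTB, hcard⟩

lemma exists_isCompletion_of_notMem_right [Fintype β] (h : StronglySaturated r σ τ) (hστ : σ ≤ τ)
    {u : α} {A C : Finset α} {B D : Finset β} (hAB : IsExtremal r σ τ C D A B)
    (huD : univ.bipartiteAbove r u ⊆ D) {v : β} (hv : v ∉ B) :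
    ∃ S T, IsCompletion r u v S T ∧ S ⊆ A ∧ T ⊆ D ∧ #S = σ ∧ #T = τ := by
  obtain ⟨T, S, hST, hTD, hSA, hT, hS⟩ :=
    h.swap.exists_isCompletion_of_notMem_left hστ hAB.swap huD hv
  exact ⟨S, T, hST.swap, hSA, hTD, hS, hT⟩

end StronglySaturated

end StrongSaturation

section Counting

open Function Rel

variable {α β : Type*} {r : α → β → Prop} [DecidableRel r] {σ τ : ℕ}

-- By the maximality of `(U, V)`, its enlargement by `u`, the new vertices of the sets `S v`, and
-- `Z` costs more than the edges it gains.
lemma IsExtremal.card_interedges_add_sum_card_sdiff_lt [DecidableEq α] [DecidableEq β]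
    {C U : Finset α} {D V Y Z : Finset β} (hUV : IsExtremal r τ σ C D U V) {u : α} (hu : u ∉ U)
    (hY : Y.Nonempty) (hYV : Y ⊆ V) (hYu : ∀ v ∈ Y, ¬ r u v) {S : β → Finset α} {T : β → Finset β}
    (hST : ∀ v ∈ Y, IsCompletion r u v (S v) (T v)) (hT : ∀ v ∈ Y, #(T v) = τ)
    (hVZ : Disjoint V Z) (hTZ : ∀ v ∈ Y, T v ⊆ V ∪ Z) :
    #(interedges r U Z) + ∑ v ∈ Y, #(S v \ U) < σ * #Z := by
  set R := Y.biUnion fun v ↦ S v \ U with hR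
  have huR : u ∉ R := by
    simp only [hR, mem_biUnion, mem_sdiff, not_exists, not_and]
    exact fun v hv huS ↦ absurd ((hST v hv).adj_right u huS) (hYu v hv)
  have hUR : Disjoint U (insert u R) := by
    refine disjoint_insert_right.mpr ⟨hu, (disjoint_biUnion_right _ _ _).mpr fun v _ ↦ ?_⟩
    exact disjoint_sdiff
  have hdeg_u : τ ≤ #((V ∪ Z).bipartiteAbove r u) := by
    obtain ⟨v, hv⟩ := hY
    exact (hT v hv).symm.le.trans (card_le_card_bipartiteAbove (hTZ v hv) (hST v hv).adj_left)
  have hsum : ∑ v ∈ Y, #(S v \ U) ≤ #(interedges r R Y) := by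
    rw [card_interedges_eq_sum_below]
    exact sum_le_sum fun v hv ↦ card_le_card_bipartiteBelow
      (subset_biUnion_of_mem (fun v ↦ S v \ U) hv)
      fun x hx ↦ (hST v hv).adj_right x (mem_sdiff.mp hx).1
  have hR_sdiff : τ * #R ≤ #(interedges r R ((V ∪ Z) \ Y)) := by
    refine mul_card_le_card_interedges_left fun x hx ↦ ?_
    obtain ⟨v, hv, hxv⟩ := mem_biUnion.mp hx
    have hTY : Disjoint (T v) Y :=
      disjoint_left.mpr fun y hyT hyY ↦ hYu y hyY ((hST v hv).adj_left y hyT)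
    exact (hT v hv).symm.le.trans (card_le_card_bipartiteAbove
      (subset_sdiff.mpr ⟨hTZ v hv, hTY⟩) ((hST v hv).adj x (mem_sdiff.mp hxv).1))
  have hR_split : #(interedges r R (V ∪ Z)) =
      #(interedges r R Y) + #(interedges r R ((V ∪ Z) \ Y)) := by
    rw [← card_interedges_union_right r R disjoint_sdiff,
      union_sdiff_of_subset (hYV.trans subset_union_left)]
  have hlt := hUV.excess_lt (Prod.mk_lt_mk_of_lt_of_le
    (left_lt_sup.mpr fun h ↦ hu (h (mem_insert_self u R))) (subset_union_left : V ⊆ V ∪ Z))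
  simp only [excess, sup_eq_union, card_interedges_union_left r hUR,
    card_interedges_union_right r U hVZ, card_interedges_insert_left r huR,
    card_union_of_disjoint hUR, card_union_of_disjoint hVZ, card_insert_of_notMem huR] at hlt
  push_cast at hlt
  zify at *
  linarith

/-- The number of neighbours in `U` that `w` lacks in order to have `σ` of them, truncated at `0`.
It is the weight of `w` in the greedy matching argument. -/
def deficiency (r : α → β → Prop) [DecidableRel r] (σ : ℕ) (U : Finset α) (w : β) : ℕ :=
  σ - #(U.bipartiteBelow r w)

lemma IsCompletion.deficiency_le_card_sdiff [DecidableEq α] {u : α} {v w : β} {U S : Finset α}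
    {T : Finset β} (h : IsCompletion r u v S T) (hw : w ∈ T) :
    deficiency r #S U w ≤ #(S \ U) := by
  have hinter : #(S ∩ U) ≤ #(U.bipartiteBelow r w) :=
    card_le_card_bipartiteBelow inter_subset_right fun x hx ↦ h.adj x (mem_inter.mp hx).1 w hw
  have hsplit := card_sdiff_add_card_inter S U
  rw [deficiency]
  lia

lemma IsExtremal.sum_deficiency_add_card_interedges {C U : Finset α} {D V Z : Finset β}
    (hUV : IsExtremal r τ σ C D U V) (hVZ : Disjoint V Z) :
    ∑ w ∈ Z, deficiency r σ U w + #(interedges r U Z) = σ * #Z := by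
  have hdef : ∀ w ∈ Z, deficiency r σ U w + #(U.bipartiteBelow r w) = σ := fun w hw ↦
    Nat.sub_add_cancel (hUV.card_bipartiteBelow_lt (disjoint_right.mp hVZ hw)).le
  rw [card_interedges_eq_sum_below, ← sum_add_distrib, sum_congr rfl hdef, sum_const, smul_eq_mul,
    mul_comm]

lemma IsExtremal.sum_deficiency_le [DecidableEq β] {C U : Finset α} {D V Y Z : Finset β}
    (hUV : IsExtremal r τ σ C D U V) {u : α} (hu : u ∉ U) (hYV : Y ⊆ V) (hYu : ∀ v ∈ Y, ¬ r u v)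
    {S : β → Finset α} {T : β → Finset β} (hST : ∀ v ∈ Y, IsCompletion r u v (S v) (T v))
    (hS : ∀ v ∈ Y, #(S v) = σ) (hT : ∀ v ∈ Y, #(T v) = τ) (hVZ : Disjoint V Z)
    (hTZ : ∀ v ∈ Y, T v ⊆ V ∪ Z) {ω : β → β} (hω : ∀ v ∈ Y, ω v ∈ T v) :
    ∑ v ∈ Y, deficiency r σ U (ω v) ≤ ∑ w ∈ Z, deficiency r σ U w := by
  classical
  obtain rfl | hY := Y.eq_empty_or_nonempty
  · simp
  have hgrowth := hUV.card_interedges_add_sum_card_sdiff_lt hu hY hYV hYu hST hT hVZ hTZ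
  have hweight : ∑ v ∈ Y, deficiency r σ U (ω v) ≤ ∑ v ∈ Y, #(S v \ U) :=
    sum_le_sum fun v hv ↦ hS v hv ▸ (hST v hv).deficiency_le_card_sdiff (hω v hv)
  have hZ := hUV.sum_deficiency_add_card_interedges hVZ
  lia

-- Each `v ∈ W` gets the largest deficiency found in its completion outside `V`: the weights of `W`
-- are then dominated, threshold by threshold, by those of the neighbours of `u` outside `V`.
lemma IsExtremal.card_le_card_sdiff [Fintype β] [DecidableEq β] {C U : Finset α}
    {D V W : Finset β} (hUV : IsExtremal r τ σ C D U V) {u : α} (hu : u ∉ U) (hWV : W ⊆ V)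
    (hWu : ∀ v ∈ W, ¬ r u v)
    (hcompl : ∀ v ∈ W, ∃ S T, IsCompletion r u v S T ∧ #S = σ ∧ #T = τ) :
    #W ≤ #(univ.bipartiteAbove r u \ V) := by
  set F := univ.bipartiteAbove r u \ V with hF
  choose! S T hST hS hT using hcompl
  have hTF : ∀ v ∈ W, T v ⊆ V ∪ F := fun v hv y hy ↦ by
    by_cases hyV : y ∈ V <;> simp [hF, hyV, (hST v hv).adj_left y hy]
  have hTF_nonempty : ∀ v ∈ W, (T v ∩ F).Nonempty := by
    intro v hv
    by_contra hempty
    rw [not_nonempty_iff_eq_empty, ← disjoint_iff_inter_eq_empty] at hempty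
    exact hu (hUV.mem_left (hempty.left_le_of_le_sup_right (hTF v hv)) (hT v hv).ge
      (hST v hv).adj_left)
  choose! ω hωTF hω_max using fun v hv ↦
    exists_max_image (T v ∩ F) (deficiency r σ U) (hTF_nonempty v hv)
  have hωT : ∀ v ∈ W, ω v ∈ T v := fun v hv ↦ (mem_inter.mp (hωTF v hv)).1
  have hpos : ∀ v ∈ W, 0 < deficiency r σ U (ω v) := fun v hv ↦
    tsub_pos_of_lt (hUV.card_bipartiteBelow_lt (mem_sdiff.mp (mem_inter.mp (hωTF v hv)).2).2)
  refine card_le_card_of_sum_filter_le (g := deficiency r σ U) hpos (fun _ _ ↦ zero_le) fun j ↦ ?_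
  have hYW : ∀ v ∈ {v ∈ W | deficiency r σ U (ω v) ≤ j}, v ∈ W := fun v hv ↦ (mem_filter.mp hv).1
  refine hUV.sum_deficiency_le hu (fun v hv ↦ hWV (hYW v hv)) (fun v hv ↦ hWu v (hYW v hv))
    (fun v hv ↦ hST v (hYW v hv)) (fun v hv ↦ hS v (hYW v hv)) (fun v hv ↦ hT v (hYW v hv))
    (disjoint_sdiff.mono_right (filter_subset _ F)) (fun v hv y hy ↦ ?_)
    fun v hv ↦ hωT v (hYW v hv)
  obtain hyV | hyF := mem_union.mp (hTF v (hYW v hv) hy)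
  · exact mem_union_left _ hyV
  · exact mem_union_right _ (mem_filter.mpr
      ⟨hyF, (hω_max v (hYW v hv) y (mem_inter.mpr ⟨hy, hyF⟩)).trans (mem_filter.mp hv).2⟩)

end Counting

section EdgeBound

open Function Rel

variable {α β : Type*} {r : α → β → Prop} [DecidableRel r] {σ τ : ℕ} [Fintype α]

namespace StronglySaturated

lemma mul_card_compl_le [DecidableEq α] (h : StronglySaturated r σ τ) (hστ : σ ≤ τ) {v₀ : β}
    {U : Finset α} {D V : Finset β}
    (hUV : IsExtremal r τ σ (univ.bipartiteBelow r v₀) D U V) :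
    σ * #Uᶜ ≤ #(interedges r Uᶜ V) := by
  refine mul_card_le_card_interedges_left fun u hu ↦ ?_
  obtain ⟨S, T, hST, -, hTV, -, hT⟩ :=
    h.exists_isCompletion_of_notMem_left hστ hUV Subset.rfl (mem_compl.mp hu)
  exact hT.symm.le.trans (card_le_card_bipartiteAbove hTV hST.adj_left)

lemma mem_left_of_notMem (h : StronglySaturated r σ τ) (hστ : σ ≤ τ) {v : β}
    {C A U : Finset α} {D D' B V : Finset β} (hUV : IsExtremal r τ σ C D U V)
    (hvC : univ.bipartiteBelow r v ⊆ C) (hAB : IsExtremal r σ τ C D' A B) {z : α} (hz : z ∉ A) :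
    z ∈ U := by
  by_contra hzU
  obtain ⟨S, T, hST, hSC, -, hS, hT⟩ := h.exists_isCompletion_of_notMem_left hστ hUV hvC hzU
  have hTB : T ⊆ B := fun y hy ↦
    hAB.mem_right (hSC.trans hAB.left_subset) hS.ge fun x hx ↦ hST.adj x hx y hy
  exact hz (hAB.mem_left hTB hT.ge hST.adj_left)

variable [Fintype β]

lemma mul_card_le_card_interedges_add_sq_of_card_lt (h : StronglySaturated r σ τ) (hστ : σ ≤ τ)
    (hcard : Fintype.card α = Fintype.card β) {v₀ : β} (hv₀ : #(univ.bipartiteBelow r v₀) < τ) :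
    (σ + τ) * Fintype.card α ≤ #(interedges r univ univ) + (σ + τ) ^ 2 := by
  classical
  obtain hn | hn := le_total (Fintype.card α) (σ + τ)
  · nlinarith
  set C := univ.bipartiteBelow r v₀ with hC
  set X : Finset β := {v | σ ≤ #(C.bipartiteBelow r v)} with hX
  have hCX : τ * #Cᶜ ≤ #(interedges r Cᶜ X) := by
    refine mul_card_le_card_interedges_left fun u hu ↦ ?_
    obtain ⟨S, T, hST, hcards⟩ := h u v₀ (by simpa [hC] using hu)
    have hSC : S ⊆ C := fun x hx ↦ by simpa [hC] using hST.adj_right x hx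
    have hSτ : #S < τ := (card_le_card hSC).trans_lt hv₀
    obtain ⟨hS, hT⟩ : #S = σ ∧ #T = τ := by lia
    have hTX : T ⊆ X := fun y hy ↦ by
      simpa [hX, ← hS] using card_le_card_bipartiteBelow hSC fun x hx ↦ hST.adj x hx y hy
    exact hT.symm.le.trans (card_le_card_bipartiteAbove hTX hST.adj_left)
  have hX_left : σ * #X ≤ #(interedges r C X) :=
    mul_card_le_card_interedges_right fun v hv ↦ (mem_filter.mp hv).2
  have hX_compl := card_interedges_add_mul_card_compl_le univ X fun v _ ↦
    h.le_card_bipartiteBelow hστ (by lia) v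
  have hX_split := card_interedges_add_card_interedges_compl_left r C X
  have hC_card := card_add_card_compl C
  have hX_card := card_add_card_compl X
  nlinarith

lemma mul_card_le_card_interedges_add_sq_of_card_compl_le [DecidableEq α] [DecidableEq β]
    (h : StronglySaturated r σ τ) (hστ : σ ≤ τ) (hcard : Fintype.card α = Fintype.card β)
    (hτ : ∀ v, τ ≤ #(univ.bipartiteBelow r v)) {v₀ : β}
    (hv₀ : #(univ.bipartiteBelow r v₀) ≤ σ + τ) {U : Finset α} {V : Finset β}
    (hUV : IsExtremal r τ σ (univ.bipartiteBelow r v₀) ∅ U V) (hle : #Uᶜ ≤ #Vᶜ) :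
    (σ + τ) * Fintype.card α ≤ #(interedges r univ univ) + (σ + τ) ^ 2 := by
  have hexcess := hUV.excess_le Subset.rfl Subset.rfl
  have hUc := h.mul_card_compl_le hστ hUV
  have hVc := card_interedges_add_mul_card_compl_le univ V fun v _ ↦ hτ v
  have hV_split := card_interedges_add_card_interedges_compl_left r U V
  have hU_card := card_add_card_compl U
  have hV_card := card_add_card_compl V
  have hdiff : (τ - σ : ℤ) * (#Vᶜ - #Uᶜ) ≥ 0 := by
    apply mul_nonneg <;> simpa
  simp only [excess, card_empty] at hexcess
  zify at *
  nlinarith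

end StronglySaturated

lemma IsExtremal.mul_card_le_card_interedges_add_sq_of_forall_notMem [Fintype β]
    [DecidableEq α] [DecidableEq β] (hcard : Fintype.card α = Fintype.card β) {C U : Finset α}
    {V : Finset β} (hC : #C ≤ σ + τ) (hUV : IsExtremal r τ σ C ∅ U V)
    (hU : ∀ u ∉ U, σ + τ ≤ #(univ.bipartiteAbove r u)) (hle : #Vᶜ ≤ #Uᶜ) :
    (σ + τ) * Fintype.card α ≤ #(interedges r univ univ) + (σ + τ) ^ 2 := by
  have hexcess := hUV.excess_le Subset.rfl Subset.rfl
  have hUc : (σ + τ) * #Uᶜ ≤ #(interedges r Uᶜ univ) :=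
    mul_card_le_card_interedges_left fun u hu ↦ hU u (mem_compl.mp hu)
  have hU_split := card_interedges_add_card_interedges_compl_left r U univ
  have hmono := card_le_card (interedges_mono (r := r) (Subset.refl U) (subset_univ V))
  have hU_card := card_add_card_compl U
  have hV_card := card_add_card_compl V
  simp only [excess, card_empty] at hexcess
  zify at *
  nlinarith

namespace StronglySaturated

variable [Fintype β] {u : α} {v₀ : β} {C A U : Finset α} {B D V : Finset β}

lemma card_sdiff_le [DecidableEq β] (h : StronglySaturated r σ τ) (hστ : σ ≤ τ)
    (hUV : IsExtremal r τ σ (univ.bipartiteBelow r v₀) D U V) (hu : u ∉ U)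
    (hdeg : #(univ.bipartiteAbove r u) ≤ σ + τ)
    (hAB : IsExtremal r σ τ C (univ.bipartiteAbove r u) A B) : #(V \ B) ≤ τ := by
  have hVB : #(V \ B) ≤ #(univ.bipartiteAbove r u \ V) := by
    refine hUV.card_le_card_sdiff hu sdiff_subset (fun v hv huv ↦ ?_) fun v hv ↦ ?_
    · exact (mem_sdiff.mp hv).2 (hAB.right_subset (by simpa using huv))
    · obtain ⟨S, T, hST, -, -, hcard⟩ :=
        h.exists_isCompletion_of_notMem_right hστ hAB Subset.rfl (mem_sdiff.mp hv).2
      exact ⟨S, T, hST, hcard⟩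
  obtain ⟨S, T, hST, -, hTV, -, hT⟩ := h.exists_isCompletion_of_notMem_left hστ hUV Subset.rfl hu
  have hinter : σ ≤ #(univ.bipartiteAbove r u ∩ V) :=
    hT ▸ card_le_card fun y hy ↦ mem_inter.mpr ⟨by simpa using hST.adj_left y hy, hTV hy⟩
  have hsplit := card_sdiff_add_card_inter (univ.bipartiteAbove r u) V
  lia

lemma card_interedges_add_le [DecidableEq α] [DecidableEq β] (h : StronglySaturated r σ τ)
    (hστ : σ ≤ τ) (hτ : ∀ v, τ ≤ #(univ.bipartiteBelow r v))
    (hUV : IsExtremal r τ σ (univ.bipartiteBelow r v₀) D U V)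
    (hAB : IsExtremal r σ τ (univ.bipartiteBelow r v₀) (univ.bipartiteAbove r u) A B) :
    #(interedges r A B) + σ * #(V \ B) + τ * #Aᶜ + τ * #(B ∪ V)ᶜ ≤ #(interedges r univ univ) := by
  have hVB : σ * #(V \ B) ≤ #(interedges r A (V \ B)) := by
    refine mul_card_le_card_interedges_right fun v hv ↦ ?_
    obtain ⟨S, T, hST, hSA, -, hS, -⟩ :=
      h.exists_isCompletion_of_notMem_right hστ hAB Subset.rfl (mem_sdiff.mp hv).2
    exact hS ▸ card_le_card_bipartiteBelow hSA hST.adj_right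
  have hAc : τ * #Aᶜ ≤ #(interedges r Aᶜ (B ∪ V)) := by
    refine mul_card_le_card_interedges_left fun z hz ↦ ?_
    have hzA := mem_compl.mp hz
    have hzU := h.mem_left_of_notMem hστ hUV Subset.rfl hAB hzA
    exact (hUV.le_card_bipartiteAbove hzU fun hzC ↦ hzA (hAB.left_subset hzC)).trans
      (card_le_card (filter_subset_filter _ subset_union_right))
  have hBVc := card_interedges_add_mul_card_compl_le univ (B ∪ V) fun v _ ↦ hτ v
  have hA_split := card_interedges_add_card_interedges_compl_left r A (B ∪ V)
  have hBV_split := card_interedges_union_right r A (disjoint_sdiff : Disjoint B (V \ B))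
  rw [union_sdiff_self_eq_union] at hBV_split
  lia

lemma mul_card_le_card_interedges_add_sq_of_notMem (h : StronglySaturated r σ τ) (hστ : σ ≤ τ)
    (hcard : Fintype.card α = Fintype.card β) (hτ : ∀ v, τ ≤ #(univ.bipartiteBelow r v))
    (hv₀ : #(univ.bipartiteBelow r v₀) ≤ σ + τ)
    (hUV : IsExtremal r τ σ (univ.bipartiteBelow r v₀) D U V) (hu : u ∉ U)
    (hdeg : #(univ.bipartiteAbove r u) ≤ σ + τ) :
    (σ + τ) * Fintype.card α ≤ #(interedges r univ univ) + (σ + τ) ^ 2 := by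
  classical
  obtain ⟨A, B, hAB⟩ :=
    exists_isExtremal r σ τ (univ.bipartiteBelow r v₀) (univ.bipartiteAbove r u)
  have hexcess := hAB.excess_le Subset.rfl Subset.rfl
  have hστ_le : τ * σ ≤ #(interedges r (univ.bipartiteBelow r v₀) (univ.bipartiteAbove r u)) := by
    obtain ⟨S, T, hST, hSC, -, hS, hT⟩ := h.exists_isCompletion_of_notMem_left hστ hUV Subset.rfl hu
    rw [← hS, ← hT]
    exact hST.card_mul_card_le_card_interedges hSC fun y hy ↦ by simpa using hST.adj_left y hy
  have hVB := h.card_sdiff_le hστ hUV hu hdeg hAB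
  have hA_card := card_add_card_compl A
  have hB_card := card_add_card_compl B
  obtain hle | hle := le_total #Aᶜ #(V \ B)
  · have hBc := card_interedges_add_mul_card_compl_le univ B fun v _ ↦ hτ v
    have hmono := card_le_card (interedges_mono (r := r) (subset_univ A) (Subset.refl B))
    have hσ : σ * #Aᶜ ≤ σ * τ := by gcongr; exact hle.trans hVB
    simp only [excess] at hexcess
    zify at *
    nlinarith
  · have hedges := h.card_interedges_add_le hστ hτ hUV hAB
    have hBV_card := card_sdiff_add_card V B
    have hBVc_card := card_add_card_compl (B ∪ V)
    have hdiff : (τ - σ : ℤ) * (#Aᶜ - #(V \ B)) ≥ 0 := by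
      apply mul_nonneg <;> simpa
    rw [union_comm] at hBV_card
    simp only [excess] at hexcess
    zify at *
    nlinarith

lemma mul_card_le_card_interedges_add_sq (h : StronglySaturated r σ τ) (hστ : σ ≤ τ)
    (hcard : Fintype.card α = Fintype.card β) :
    (σ + τ) * Fintype.card α ≤ #(interedges r univ univ) + (σ + τ) ^ 2 := by
  classical
  by_cases hτ : ∀ v, τ ≤ #(univ.bipartiteBelow r v)
  swap
  · push Not at hτ
    obtain ⟨v₀, hv₀⟩ := hτ
    exact h.mul_card_le_card_interedges_add_sq_of_card_lt hστ hcard hv₀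
  by_cases hd : ∀ v, σ + τ ≤ #(univ.bipartiteBelow r v)
  · rw [hcard]
    exact (mul_card_le_card_interedges_right fun v _ ↦ hd v).trans (Nat.le_add_right _ _)
  push Not at hd
  obtain ⟨v₀, hv₀⟩ := hd
  obtain ⟨U, V, hUV⟩ := exists_isExtremal r τ σ (univ.bipartiteBelow r v₀) ∅
  obtain hle | hle := le_total #Uᶜ #Vᶜ
  · exact h.mul_card_le_card_interedges_add_sq_of_card_compl_le hστ hcard hτ hv₀.le hUV hle
  by_cases hU : ∀ u ∉ U, σ + τ ≤ #(univ.bipartiteAbove r u)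
  · exact hUV.mul_card_le_card_interedges_add_sq_of_forall_notMem hcard hv₀.le hU hle
  push Not at hU
  obtain ⟨u, hu, hdeg⟩ := hU
  exact h.mul_card_le_card_interedges_add_sq_of_notMem hστ hcard hτ hv₀.le hUV hu hdeg.le

end StronglySaturated

end EdgeBound

section Saturated

variable {n s t : ℕ} {E : Finset (Fin n × Fin n)}

lemma exists_isCompletion_of_containsK_insert {u v : Fin n} (hE : ¬ containsK E s t)
    (h : containsK (insert (u, v) E) s t) :
    ∃ S T, IsCompletion (fun x y ↦ (x, y) ∈ E) u v S T ∧ #S = s - 1 ∧ #T = t - 1 := by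
  obtain ⟨S, T, hS, hT, hST⟩ := h
  have hmem : ∀ x ∈ S, ∀ y ∈ T, ¬ (x = u ∧ y = v) → (x, y) ∈ E := fun x hx y hy hxy ↦
    mem_of_mem_insert_of_ne (hST x hx y hy) (by simpa using hxy)
  obtain ⟨huS, hvT⟩ : u ∈ S ∧ v ∈ T := by
    by_contra huv
    refine hE ⟨S, T, hS, hT, fun x hx y hy ↦ hmem x hx y hy ?_⟩
    rintro ⟨rfl, rfl⟩
    exact huv ⟨hx, hy⟩
  refine ⟨S.erase u, T.erase v, ⟨fun x hx ↦ ?_, fun y hy ↦ ?_, fun x hx y hy ↦ ?_⟩,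
    hS ▸ card_erase_of_mem huS, hT ▸ card_erase_of_mem hvT⟩
  · exact hmem x (mem_of_mem_erase hx) v hvT fun hxy ↦ ne_of_mem_erase hx hxy.1
  · exact hmem u huS y (mem_of_mem_erase hy) fun hxy ↦ ne_of_mem_erase hy hxy.2
  · exact hmem x (mem_of_mem_erase hx) y (mem_of_mem_erase hy) fun hxy ↦ ne_of_mem_erase hx hxy.1

lemma Saturated.stronglySaturated (h : Saturated s t E) :
    StronglySaturated (fun u v ↦ (u, v) ∈ E) (s - 1) (t - 1) := by
  obtain ⟨hE, hadd⟩ := h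
  rw [not_or] at hE
  intro u v huv
  obtain hK | hK := hadd u v huv
  · obtain ⟨S, T, hST, hcard⟩ := exists_isCompletion_of_containsK_insert hE.1 hK
    exact ⟨S, T, hST, .inl hcard⟩
  · obtain ⟨S, T, hST, hcard⟩ := exists_isCompletion_of_containsK_insert hE.2 hK
    exact ⟨S, T, hST, .inr hcard⟩

end Saturated

theorem stmt3_general {α β : Type*} [Fintype α] [Fintype β] {r : α → β → Prop} [DecidableRel r]
    {σ τ : ℕ} (h : StronglySaturated r σ τ) (hcard : Fintype.card α = Fintype.card β) :
    (Fintype.card α : ℤ) * (σ + τ : ℕ) - ((σ + τ : ℕ) : ℤ) ^ 2 ≤ #(Rel.interedges r univ univ) := by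
  have hle : (σ + τ) * Fintype.card α ≤ #(Rel.interedges r univ univ) + (σ + τ) ^ 2 := by
    obtain hστ | hτσ := le_total σ τ
    · exact h.mul_card_le_card_interedges_add_sq hστ hcard
    · rw [add_comm σ τ]
      exact h.symm.mul_card_le_card_interedges_add_sq hτσ hcard
  zify at hle ⊢
  linarith

theorem stmt3 (n s t : ℕ) (hs : 1 ≤ s) (hst : s ≤ t) (htn : t ≤ n)
    (E : Finset (Fin n × Fin n)) (hsat : Saturated s t E) :
    (n : ℤ) * (s + t - 2 : ℕ) - ((s + t - 2 : ℕ) : ℤ) ^ 2 ≤ (E.card : ℤ) := by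
  have hd : s + t - 2 = (s - 1) + (t - 1) := by lia
  simpa [hd, Rel.interedges] using stmt3_general hsat.stronglySaturated rfl
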